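/- Assume a ∈ (0,1), b ≥ 1−a, and that α, β, p, h satisfy either α ≥ √3·β, or (α < √3·β and 4h(β+p) ≥ p⁴). Let c, d > 0 with 0 < c/d ≤ (β+p)/k and let δ₁ = [(a−b−1) + √((p−1)² + 4β(c/d))]/2. If δ₁ < δ < 0, then the functions F(a−1−δ, b+δ; p; 1−x^d) and F(a−1, b; p; 1−x^c) of x are not comparable on (0,1): there exist x, y ∈ (0,1) such that F(a−1, b; p; 1−x^c) < F(a−1−δ, b+δ; p; 1−x^d) and F(a−1, b; p; 1−y^c) > F(a−1−δ, b+δ; p; 1−y^d). -/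

import Mathlib

open Real Set Filter Topology

/-- The Gaussian hypergeometric function `F(a,b;c;x)`, defined as a power series
with Pochhammer (shifted factorial) coefficients. -/
noncomputable def hyp (a b c x : ℝ) : ℝ :=
  ∑' n : ℕ, ((∏ i ∈ Finset.range n, (a + i)) * (∏ i ∈ Finset.range n, (b + i)) /
    ((∏ i ∈ Finset.range n, (c + i)) * (Nat.factorial n))) * x ^ n

/-- The `n`-th coefficient of the power series defining `hyp A B C`. -/
noncomputable def hypCoeff (A B C : ℝ) (n : ℕ) : ℝ :=
  (∏ i ∈ Finset.range n, (A + i)) * (∏ i ∈ Finset.range n, (B + i)) /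
    ((∏ i ∈ Finset.range n, (C + i)) * (Nat.factorial n))

/-- The `i`-th factor of the infinite product for `hyp A B (A + B + 1) 1`. -/
noncomputable def hypFactor (A B : ℝ) (i : ℕ) : ℝ :=
  1 + A * B / ((i + 1) * (A + B + 1 + i))

theorem hypFactor_eq {A B : ℝ} (hA : -1 < A) (hB : 0 < B) (i : ℕ) :
    hypFactor A B i = (A + 1 + i) * (B + 1 + i) / ((i + 1) * (A + B + 1 + i)) := by
  have hi : (0 : ℝ) ≤ i := i.cast_nonneg
  have h1 : (i : ℝ) + 1 ≠ 0 := by positivity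
  have h2 : A + B + 1 + i ≠ 0 := by linarith
  rw [hypFactor]
  field_simp
  ring

theorem hypFactor_pos {A B : ℝ} (hA : -1 < A) (hB : 0 < B) (i : ℕ) : 0 < hypFactor A B i := by
  have hi : (0 : ℝ) ≤ i := i.cast_nonneg
  rw [hypFactor_eq hA hB]
  have h1 : 0 < A + 1 + i := by linarith
  have h2 : 0 < A + B + 1 + i := by linarith
  positivity

theorem hypCoeff_succ {A B : ℝ} (hA : -1 < A) (hB : 0 < B) (n : ℕ) :
    hypCoeff A B (A + B + 1) (n + 1) =
      A * B / ((n + 1) * (A + B + 1 + n)) * ∏ i ∈ Finset.range n, hypFactor A B i := by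
  induction n with
  | zero => simp [hypCoeff]
  | succ n ih =>
    have hn : (0 : ℝ) ≤ n := n.cast_nonneg
    have h1 : A + B + 1 + n ≠ 0 := by linarith
    have h2 : A + B + 1 + (n + 1) ≠ 0 := by linarith
    have h3 : (n : ℝ) + 1 ≠ 0 := by positivity
    have h4 : (n : ℝ) + 1 + 1 ≠ 0 := by positivity
    have key : hypCoeff A B (A + B + 1) (n + 1 + 1) = hypCoeff A B (A + B + 1) (n + 1) *
        ((A + (n + 1)) * (B + (n + 1)) / ((A + B + 1 + (n + 1)) * (n + 1 + 1))) := by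
      simp only [hypCoeff]
      rw [Finset.prod_range_succ _ (n + 1), Finset.prod_range_succ _ (n + 1),
        Finset.prod_range_succ _ (n + 1), Nat.factorial_succ (n + 1)]
      push_cast
      rw [div_mul_div_comm]
      congr 1 <;> ring
    rw [key, ih, Finset.prod_range_succ, hypFactor_eq hA hB]
    push_cast
    field_simp
    ring

/-- The partial sums of the series at `1` telescope into finite products. -/
theorem sum_hypCoeff {A B : ℝ} (hA : -1 < A) (hB : 0 < B) (n : ℕ) :
    ∑ i ∈ Finset.range (n + 1), hypCoeff A B (A + B + 1) i =
      ∏ i ∈ Finset.range n, hypFactor A B i := by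
  induction n with
  | zero => simp [hypCoeff]
  | succ n ih =>
    rw [Finset.sum_range_succ, ih, hypCoeff_succ hA hB, Finset.prod_range_succ, hypFactor]
    ring

theorem hypCoeff_succ_nonpos {A B : ℝ} (hA : -1 < A) (hA0 : A < 0) (hB : 0 < B) (n : ℕ) :
    hypCoeff A B (A + B + 1) (n + 1) ≤ 0 := by
  have hn : (0 : ℝ) ≤ n := n.cast_nonneg
  rw [hypCoeff_succ hA hB]
  refine mul_nonpos_of_nonpos_of_nonneg ?_
    (Finset.prod_nonneg fun i _ => (hypFactor_pos hA hB i).le)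
  refine div_nonpos_of_nonpos_of_nonneg (mul_nonpos_of_nonpos_of_nonneg hA0.le hB.le) ?_
  have : 0 < A + B + 1 + n := by linarith
  positivity

theorem summable_hypCoeff {A B : ℝ} (hA : -1 < A) (hA0 : A < 0) (hB : 0 < B) :
    Summable (hypCoeff A B (A + B + 1)) := by
  rw [← summable_nat_add_iff 1, ← summable_neg_iff]
  refine summable_of_sum_range_le (c := 1)
    (fun n => neg_nonneg.2 (hypCoeff_succ_nonpos hA hA0 hB n)) fun n => ?_
  have h1 := sum_hypCoeff hA hB n
  have h2 : 0 ≤ ∏ i ∈ Finset.range n, hypFactor A B i :=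
    Finset.prod_nonneg fun i _ => (hypFactor_pos hA hB i).le
  rw [Finset.sum_range_succ'] at h1
  have h3 : hypCoeff A B (A + B + 1) 0 = 1 := by simp [hypCoeff]
  rw [Finset.sum_neg_distrib]
  linarith

theorem tendsto_prod_hypFactor {A B : ℝ} (hA : -1 < A) (hA0 : A < 0) (hB : 0 < B) :
    Tendsto (fun n => ∏ i ∈ Finset.range n, hypFactor A B i) atTop
      (𝓝 (hyp A B (A + B + 1) 1)) := by
  have h := (summable_hypCoeff hA hA0 hB).hasSum.tendsto_sum_nat.comp (tendsto_add_atTop_nat 1)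
  have h1 : hyp A B (A + B + 1) 1 = ∑' n, hypCoeff A B (A + B + 1) n := by
    simp [hyp, hypCoeff]
  rw [h1]
  exact h.congr fun n => sum_hypCoeff hA hB n

theorem hyp_one_pos {A B : ℝ} (hA : -1 < A) (hA0 : A < 0) (hB : 0 < B) :
    0 < hyp A B (A + B + 1) 1 := by
  have hs : Summable fun i : ℕ => ‖A * B / ((i + 1) * (A + B + 1 + i))‖ := by
    have h2 : Summable fun n : ℕ => |A| * (1 / ((n : ℝ) + 1) ^ 2) * (B / min (A + B + 1) 1) := by
      refine Summable.mul_right _ (Summable.mul_left _ ?_)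
      have := (summable_nat_add_iff 1).2 (Real.summable_one_div_nat_pow (p := 2).2 one_lt_two)
      simpa using this
    refine Summable.of_nonneg_of_le (fun _ => norm_nonneg _) (fun n => ?_) h2
    have hn : (0 : ℝ) ≤ n := n.cast_nonneg
    have hm : 0 < min (A + B + 1) 1 := lt_min (by linarith) one_pos
    have hD : min (A + B + 1) 1 * (n + 1) ≤ A + B + 1 + n := by
      nlinarith [min_le_left (A + B + 1) 1, min_le_right (A + B + 1) 1]
    have hpos : 0 < A + B + 1 + n := by linarith
    rw [norm_div, norm_mul, norm_mul, Real.norm_eq_abs, Real.norm_eq_abs, Real.norm_eq_abs,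
      Real.norm_eq_abs, abs_of_pos hB, abs_of_pos hpos, abs_of_pos (by positivity : (0:ℝ) < n + 1)]
    rw [mul_one_div, div_mul_div_comm]
    refine div_le_div_of_nonneg_left (by positivity) (by positivity) ?_
    nlinarith
  have hne := tprod_one_add_ne_zero_of_summable (fun i => (hypFactor_pos hA hB i).ne') hs
  have ht := (multipliable_one_add_of_summable hs).hasProd.tendsto_prod_nat
  have heq := tendsto_nhds_unique ht (tendsto_prod_hypFactor hA hA0 hB)
  rw [heq] at hne
  refine lt_of_le_of_ne ?_ hne.symm
  exact ge_of_tendsto' (tendsto_prod_hypFactor hA hA0 hB) fun n =>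
    Finset.prod_nonneg fun i _ => (hypFactor_pos hA hB i).le

/-- With `A + B` fixed, `hyp A B (A + B + 1) 1` is strictly increasing in `A * B`. -/
theorem hyp_one_lt_hyp_one {A B A' B' : ℝ} (hA : -1 < A) (hA0 : A < 0) (hB : 0 < B)
    (hA' : -1 < A') (hA0' : A' < 0) (hB' : 0 < B') (hsum : A + B = A' + B')
    (hmul : A * B < A' * B') :
    hyp A B (A + B + 1) 1 < hyp A' B' (A' + B' + 1) 1 := by
  have hle (i : ℕ) : hypFactor A B i < hypFactor A' B' i := by
    have hi : (0 : ℝ) ≤ i := i.cast_nonneg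
    have : 0 < A' + B' + 1 + i := by linarith
    simp only [hypFactor, hsum]
    gcongr
  set ρ := hypFactor A' B' 0 / hypFactor A B 0 with hρ
  have hρ1 : 1 < ρ := (one_lt_div (hypFactor_pos hA hB 0)).2 (hle 0)
  have hprod (n : ℕ) : ρ * ∏ i ∈ Finset.range (n + 1), hypFactor A B i ≤
      ∏ i ∈ Finset.range (n + 1), hypFactor A' B' i := by
    rw [Finset.prod_range_succ', Finset.prod_range_succ' _ n, mul_left_comm, hρ,
      div_mul_cancel₀ _ (hypFactor_pos hA hB 0).ne']
    refine mul_le_mul_of_nonneg_right ?_ (hypFactor_pos hA' hB' 0).le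
    exact Finset.prod_le_prod (fun i _ => (hypFactor_pos hA hB _).le) fun i _ => (hle _).le
  have hlim := le_of_tendsto_of_tendsto'
    (((tendsto_prod_hypFactor hA hA0 hB).comp (tendsto_add_atTop_nat 1)).const_mul ρ)
    ((tendsto_prod_hypFactor hA' hA0' hB').comp (tendsto_add_atTop_nat 1)) hprod
  nlinarith [hyp_one_pos hA hA0 hB]

theorem continuousOn_hyp {A B : ℝ} (hA : -1 < A) (hA0 : A < 0) (hB : 0 < B) :
    ContinuousOn (hyp A B (A + B + 1)) (Icc 0 1) := by
  refine continuousOn_tsum (u := fun n => ‖hypCoeff A B (A + B + 1) n‖)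
    (fun n => by fun_prop) (summable_hypCoeff hA hA0 hB).norm fun n x hx => ?_
  rw [norm_mul, norm_pow, Real.norm_of_nonneg hx.1]
  exact mul_le_of_le_one_right (norm_nonneg _) (pow_le_one₀ hx.1 hx.2)

theorem summable_hypCoeff_mul_pow {A B x : ℝ} (hA : -1 < A) (hA0 : A < 0) (hB : 0 < B)
    (hx : x ∈ Icc (0 : ℝ) 1) : Summable fun n => hypCoeff A B (A + B + 1) n * x ^ n := by
  refine Summable.of_norm_bounded (summable_hypCoeff hA hA0 hB).norm fun n => ?_
  rw [norm_mul, norm_pow, Real.norm_of_nonneg hx.1]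
  exact mul_le_of_le_one_right (norm_nonneg _) (pow_le_one₀ hx.1 hx.2)

theorem hyp_eq_linear_add_tsum {A B x : ℝ} (hA : -1 < A) (hA0 : A < 0) (hB : 0 < B)
    (hx : x ∈ Icc (0 : ℝ) 1) :
    hyp A B (A + B + 1) x = 1 + A * B / (A + B + 1) * x +
      ∑' n, hypCoeff A B (A + B + 1) (n + 2) * x ^ (n + 2) := by
  have h := (summable_hypCoeff_mul_pow hA hA0 hB hx).sum_add_tsum_nat_add 2
  rw [show hyp A B (A + B + 1) x = ∑' n, hypCoeff A B (A + B + 1) n * x ^ n from rfl, ← h]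
  simp [Finset.sum_range_succ, hypCoeff]

theorem hyp_le_linear {A B x : ℝ} (hA : -1 < A) (hA0 : A < 0) (hB : 0 < B)
    (hx : x ∈ Icc (0 : ℝ) 1) :
    hyp A B (A + B + 1) x ≤ 1 + A * B / (A + B + 1) * x := by
  rw [hyp_eq_linear_add_tsum hA hA0 hB hx]
  have : ∑' n, hypCoeff A B (A + B + 1) (n + 2) * x ^ (n + 2) ≤ 0 :=
    tsum_nonpos fun n => mul_nonpos_of_nonpos_of_nonneg
      (hypCoeff_succ_nonpos hA hA0 hB (n + 1)) (pow_nonneg hx.1 _)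
  linarith

theorem exists_linear_sub_sq_le_hyp {A B : ℝ} (hA : -1 < A) (hA0 : A < 0) (hB : 0 < B) :
    ∃ M : ℝ, ∀ x ∈ Icc (0 : ℝ) 1,
      1 + A * B / (A + B + 1) * x - M * x ^ 2 ≤ hyp A B (A + B + 1) x := by
  refine ⟨-∑' n, hypCoeff A B (A + B + 1) (n + 2), fun x hx => ?_⟩
  rw [hyp_eq_linear_add_tsum hA hA0 hB hx, neg_mul, sub_neg_eq_add, ← tsum_mul_right]
  refine add_le_add_right (Summable.tsum_le_tsum (fun n => ?_)
    (((summable_nat_add_iff 2).2 (summable_hypCoeff hA hA0 hB)).mul_right _)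
    ((summable_nat_add_iff 2).2 (summable_hypCoeff_mul_pow hA hA0 hB hx))) _
  exact mul_le_mul_of_nonpos_left (pow_le_pow_of_le_one hx.1 hx.2 (by omega))
    (hypCoeff_succ_nonpos hA hA0 hB (n + 1))

theorem continuousOn_hyp_one_sub_rpow {A B e : ℝ} (hA : -1 < A) (hA0 : A < 0) (hB : 0 < B)
    (he : 0 < e) : ContinuousOn (fun x : ℝ => hyp A B (A + B + 1) (1 - x ^ e)) (Icc 0 1) := by
  refine (continuousOn_hyp hA hA0 hB).comp
    (continuous_const.sub (Real.continuous_rpow_const he.le)).continuousOn fun x hx => ?_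
  have h0 := Real.rpow_nonneg hx.1 e
  have h1 := Real.rpow_le_one hx.1 hx.2 he.le
  exact ⟨by linarith, by linarith⟩

/-- Comparison near `0`, governed by the values of the hypergeometric functions at `1`. -/
theorem exists_hyp_one_sub_rpow_lt {A B A' B' c d : ℝ} (hA : -1 < A) (hA0 : A < 0) (hB : 0 < B)
    (hA' : -1 < A') (hA0' : A' < 0) (hB' : 0 < B') (hc : 0 < c) (hd : 0 < d)
    (hsum : A + B = A' + B') (hmul : A * B < A' * B') :
    ∃ x ∈ Ioo (0 : ℝ) 1,
      hyp A B (A + B + 1) (1 - x ^ c) < hyp A' B' (A' + B' + 1) (1 - x ^ d) := by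
  have h0 : (0 : ℝ) ∈ Icc (0 : ℝ) 1 := ⟨le_rfl, zero_le_one⟩
  have h1 := (continuousOn_hyp_one_sub_rpow hA hA0 hB hc 0 h0).mono Ioo_subset_Icc_self
  have h2 := (continuousOn_hyp_one_sub_rpow hA' hA0' hB' hd 0 h0).mono Ioo_subset_Icc_self
  have hlt := hyp_one_lt_hyp_one hA hA0 hB hA' hA0' hB' hsum hmul
  have hev := h1.eventually_lt h2 (by simpa [Real.zero_rpow hc.ne', Real.zero_rpow hd.ne'] using hlt)
  have : (𝓝[Ioo (0 : ℝ) 1] 0).NeBot := by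
    rw [nhdsWithin_Ioo_eq_nhdsGT one_pos]
    infer_instance
  obtain ⟨x, hx, hxI⟩ := (hev.and self_mem_nhdsWithin).exists
  exact ⟨x, hxI, hx⟩

/-- Comparison near `1`, governed by the linear coefficients of the hypergeometric functions. -/
theorem exists_lt_hyp_one_sub_rpow {A B A' B' c d : ℝ} (hA : -1 < A) (hA0 : A < 0) (hB : 0 < B)
    (hA' : -1 < A') (hA0' : A' < 0) (hB' : 0 < B') (hc : 0 < c) (hd : 0 < d)
    (hsum : A + B = A' + B') (hmul : A' * B' * d < A * B * c) :
    ∃ y ∈ Ioo (0 : ℝ) 1,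
      hyp A' B' (A' + B' + 1) (1 - y ^ d) < hyp A B (A + B + 1) (1 - y ^ c) := by
  obtain ⟨M, hM⟩ := exists_linear_sub_sq_le_hyp hA hA0 hB
  have hp : 0 < A + B + 1 := by linarith
  have hr (e : ℝ) : HasDerivAt (fun y : ℝ => 1 - y ^ e) (-e) 1 := by
    simpa using (Real.hasDerivAt_rpow_const (x := 1) (p := e) (.inl one_ne_zero)).const_sub 1
  have hg : HasDerivAt (fun y : ℝ => A * B / (A + B + 1) * (1 - y ^ c) - M * (1 - y ^ c) ^ 2 -
      A' * B' / (A + B + 1) * (1 - y ^ d)) ((A' * B' * d - A * B * c) / (A + B + 1)) 1 := by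
    refine ((((hr c).const_mul _).sub (((hr c).pow 2).const_mul M)).sub
      ((hr d).const_mul _)).congr_deriv ?_
    simp
    ring
  have hneg : (A' * B' * d - A * B * c) / (A + B + 1) < 0 :=
    div_neg_of_neg_of_pos (by linarith) hp
  have hslope := (hasDerivAt_iff_tendsto_slope_left_right.1 hg).1.eventually_lt_const hneg
  have hmem : ∀ᶠ y in 𝓝[<] (1 : ℝ), y ∈ Ioo (0 : ℝ) 1 := Ioo_mem_nhdsLT one_pos
  obtain ⟨y, hy, hyI⟩ := (hslope.and hmem).exists
  refine ⟨y, hyI, ?_⟩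
  have hI (e : ℝ) (he : 0 < e) : 1 - y ^ e ∈ Icc (0 : ℝ) 1 := by
    have h0 := Real.rpow_nonneg hyI.1.le e
    have h1 := Real.rpow_le_one hyI.1.le hyI.2.le he.le
    exact ⟨by linarith, by linarith⟩
  have hlow := hM _ (hI c hc)
  have hup := hyp_le_linear hA' hA0' hB' (hI d hd)
  rw [← hsum] at hup ⊢
  rw [slope_def_field, div_neg_iff] at hy
  rcases hy with hy | hy
  · simp only [Real.one_rpow] at hy
    linarith [hy.1]
  · linarith [hy.2, hyI.2]

theorem stmt2 (a b c d δ δ₁ α β p h k : ℝ)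
    (ha : a ∈ Ioo (0:ℝ) 1) (hb : 1 - a ≤ b)
    (hα : α = a * (b + 1)) (hβ : β = b * (1 - a)) (hp : p = a + b)
    (hh : h = α * β * (p + β)) (hk : k = β * (p + 1) + p)
    (hcase : α ≥ Real.sqrt 3 * β ∨ (α < Real.sqrt 3 * β ∧ 4 * h * (β + p) ≥ p ^ 4))
    (hc : 0 < c) (hd : 0 < d) (hcd : c / d ≤ (β + p) / k)
    (hδ₁ : δ₁ = ((a - b - 1) + Real.sqrt ((p - 1) ^ 2 + 4 * β * (c / d))) / 2)
    (hδ : δ₁ < δ) (hδ0 : δ < 0) :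
    (∃ x ∈ Ioo (0:ℝ) 1,
      hyp (a - 1) b p (1 - x ^ c) < hyp (a - 1 - δ) (b + δ) p (1 - x ^ d)) ∧
    (∃ y ∈ Ioo (0:ℝ) 1,
      hyp (a - 1) b p (1 - y ^ c) > hyp (a - 1 - δ) (b + δ) p (1 - y ^ d)) := by
  obtain ⟨ha0, ha1⟩ := ha
  have hb0 : 0 < b := by linarith
  have hβ0 : 0 < β := by rw [hβ]; exact mul_pos hb0 (by linarith)
  have hr : 0 < c / d := div_pos hc hd
  have hβr : 0 < β * (c / d) := mul_pos hβ0 hr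
  have hsqrt : p - 1 < √((p - 1) ^ 2 + 4 * β * (c / d)) :=
    Real.lt_sqrt_of_sq_lt (by linarith)
  have hδa : a - 1 < δ := by linarith
  have hquad : β * (c / d) < (1 - a + δ) * (b + δ) := by
    have h1 : (p - 1) ^ 2 + 4 * β * (c / d) < (2 * δ - (a - b - 1)) ^ 2 :=
      (Real.sqrt_lt' (by linarith)).1 (by linarith)
    rw [hp, hβ] at h1
    rw [hβ]
    nlinarith
  have hlin : β * c < (1 - a + δ) * (b + δ) * d := by
    rw [← mul_div_assoc] at hquad
    exact (div_lt_iff₀ hd).1 hquad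
  have e1 : p = a - 1 + b + 1 := by linarith
  have e2 : p = a - 1 - δ + (b + δ) + 1 := by linarith
  have hmul : (a - 1) * b < (a - 1 - δ) * (b + δ) := by nlinarith
  rw [hβ] at hlin
  constructor
  · have := exists_hyp_one_sub_rpow_lt (A := a - 1) (B := b) (A' := a - 1 - δ) (B' := b + δ)
      (by linarith) (by linarith) hb0 (by linarith) (by linarith) (by linarith) hc hd
      (by ring) hmul
    rwa [← e1, ← e2] at this
  · have := exists_lt_hyp_one_sub_rpow (A := a - 1) (B := b) (A' := a - 1 - δ) (B' := b + δ)
      (by linarith) (by linarith) hb0 (by linarith) (by linarith) (by linarith) hc hd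
      (by ring) (by linarith)
    rwa [← e1, ← e2] at this
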